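/- Let $b>0$, let $F(p):=\sqrt{|p|^2+b|p|^4}$ for $p\in\mathbb{R}^2$, let $p_0\in\mathbb{R}^2\setminus\{(0,0)\}$ and $\tilde A\in\mathbb{R}$. Consider the problem of minimizing $$E(\gamma):=\int_s^e F(\gamma(t))\,|\gamma'(t)|\,dt\in[0,\infty]$$ over all curves $\gamma=(\gamma^1,\gamma^2):[s,e]\to\mathbb{R}^2$, on an arbitrary compact parameter interval, that are continuous on $[s,e]$ and locally Lipschitz on $[s,e)$ (so that curves of infinite Euclidean length that spiral into the origin are allowed), with $\gamma(s)=p_0$, $\gamma(e)=(0,0)$ and $$\tilde{\mathcal A}(\gamma):=\frac12\int_s^e\big(\gamma^1(\gamma^2)'-\gamma^2(\gamma^1)'\big)\,dt=\tilde A,$$ the last integral being required to converge absolutely. Then a minimizer exists if and only if $$|\tilde A|\le\frac{|p_0|}{2\sqrt b}.$$ -/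

import Mathlib

open MeasureTheory Set

noncomputable section

namespace OneWell

/-- The Euclidean plane. -/
abbrev Plane : Type := EuclideanSpace ℝ (Fin 2)

/-- The conformal factor `F(p) = √(|p|² + b|p|⁴)`. -/
def factor (b : ℝ) (p : Plane) : ℝ := Real.sqrt (‖p‖ ^ 2 + b * ‖p‖ ^ 4)

/-- The energy `E(γ) = ∫ F(γ(t)) |γ'(t)| dt` over `[s, e]`, a value in `[0, ∞]`.
(A locally Lipschitz curve is differentiable almost everywhere.) -/
def energy (b s e : ℝ) (γ : ℝ → Plane) : ENNReal :=
  ∫⁻ t in Icc s e, ENNReal.ofReal (factor b (γ t) * ‖deriv γ t‖)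

/-- The density `½ (γ¹ (γ²)' − γ² (γ¹)')` of the form `ω₁ = ½ r² dθ` along `γ`. -/
def areaDensity (γ : ℝ → Plane) (t : ℝ) : ℝ :=
  (1 / 2) * (γ t 0 * deriv γ t 1 - γ t 1 * deriv γ t 0)

/-- The admissible curves `γ : [s, e] → ℝ²` for the starting point `p₀` and the area `A`.
Only the values of `γ` on `[s, e]` matter. The curve is continuous on `[s, e]`, it is locally
Lipschitz on `[s, e)`, that is, up to but not necessarily at the time at which it ends in the
well (so its Euclidean length may be infinite), and its area integral converges absolutely. -/
structure Admissible (p₀ : Plane) (A s e : ℝ) (γ : ℝ → Plane) : Prop where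
  le : s ≤ e
  continuousOn : ContinuousOn γ (Icc s e)
  locallyLipschitzOn : LocallyLipschitzOn (Ico s e) γ
  start_eq : γ s = p₀
  end_eq : γ e = 0
  area_integrable : IntegrableOn (areaDensity γ) (Icc s e)
  area_eq : ∫ t in Icc s e, areaDensity γ t = A

/-- `γ` on `[s, e]` minimizes the energy among all admissible curves (with the same starting
point and the same area, on any parameter interval). -/
def IsMinimizer (b : ℝ) (p₀ : Plane) (A s e : ℝ) (γ : ℝ → Plane) : Prop :=
  Admissible p₀ A s e γ ∧
    ∀ (s' e' : ℝ) (ζ : ℝ → Plane), Admissible p₀ A s' e' ζ → energy b s e γ ≤ energy b s' e' ζ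

end OneWell

end

namespace OneWell

section Calculus

theorem _root_.LocallyLipschitz.comp_locallyLipschitzOn {α β γ : Type*} [PseudoEMetricSpace α]
    [PseudoEMetricSpace β] [PseudoEMetricSpace γ] {f : α → β} {g : β → γ} {s : Set α}
    (hg : LocallyLipschitz g) (hf : LocallyLipschitzOn s f) : LocallyLipschitzOn s (g ∘ f) := by
  rw [locallyLipschitzOn_iff_restrict] at hf ⊢
  exact hg.comp hf

theorem ae_differentiableAt_of_locallyLipschitzOn_Ico {V : Type*} [NormedAddCommGroup V]
    [NormedSpace ℝ V] [FiniteDimensional ℝ V] {s e : ℝ} {f : ℝ → V}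
    (hf : LocallyLipschitzOn (Ico s e) f) :
    ∀ᵐ t, t ∈ Ioo s e → DifferentiableAt ℝ f t := by
  have hbv : LocallyBoundedVariationOn f (Ico s e) := by
    intro a b ha hb
    have hsub : Icc a b ⊆ Ico s e := fun x hx => ⟨ha.1.trans hx.1, hx.2.trans_lt hb.2⟩
    obtain ⟨K, hK⟩ := (hf.mono hsub).exists_lipschitzOnWith_of_compact isCompact_Icc
    rw [inter_eq_right.2 hsub]
    rcases le_or_gt a b with hab | hab
    · have := hK.locallyBoundedVariationOn a b (left_mem_Icc.2 hab) (right_mem_Icc.2 hab)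
      rwa [inter_self] at this
    · rw [Icc_eq_empty (not_le.2 hab)]
      simp [BoundedVariationOn]
  filter_upwards [hbv.ae_differentiableWithinAt_of_mem] with t ht hts
  exact (ht (Ioo_subset_Ico_self hts)).differentiableAt (Ico_mem_nhds hts.1 hts.2)

theorem integral_deriv_eq_sub_of_locallyLipschitzOn_Ico {s e : ℝ} {φ : ℝ → ℝ} (hse : s < e)
    (hc : ContinuousOn φ (Icc s e)) (hl : LocallyLipschitzOn (Ico s e) φ)
    (hi : IntegrableOn (deriv φ) (Icc s e)) : ∫ t in Icc s e, deriv φ t = φ e - φ s := by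
  have key : EqOn (fun x => ∫ t in Icc s x, deriv φ t) (fun x => φ x - φ s) (Ico s e) := by
    intro x hx
    obtain ⟨K, hK⟩ := (hl.mono (Icc_subset_Ico_right hx.2)).exists_lipschitzOnWith_of_compact
      isCompact_Icc
    rw [← uIcc_of_le hx.1] at hK
    have := hK.absolutelyContinuousOnInterval.integral_deriv_eq_sub
    rw [intervalIntegral.integral_of_le hx.1, ← integral_Icc_eq_integral_Ioc] at this
    exact this
  have h2 := key.of_subset_closure (t := Icc s e) (intervalIntegral.continuousOn_primitive_Icc hi)
    (hc.sub continuousOn_const) Ico_subset_Icc_self (by rw [closure_Ico hse.ne])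
  exact h2 (right_mem_Icc.2 hse.le)

end Calculus

/-- The angular momentum of a velocity `v` at the point `p`. -/
def wedge (p v : Plane) : ℝ := p 0 * v 1 - p 1 * v 0

theorem inner_eq (p v : Plane) : inner ℝ p v = p 0 * v 0 + p 1 * v 1 := by
  simp [PiLp.inner_apply, Fin.sum_univ_two, mul_comm]

theorem norm_sq_eq (p : Plane) : ‖p‖ ^ 2 = p 0 ^ 2 + p 1 ^ 2 := by
  simp [EuclideanSpace.norm_sq_eq, Fin.sum_univ_two]

theorem wedge_sq_add_inner_sq (p v : Plane) :
    wedge p v ^ 2 + inner ℝ p v ^ 2 = ‖p‖ ^ 2 * ‖v‖ ^ 2 := by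
  rw [norm_sq_eq, norm_sq_eq, inner_eq, wedge]; ring

theorem factor_sq {b : ℝ} (hb : 0 < b) (p : Plane) : factor b p ^ 2 = ‖p‖ ^ 2 + b * ‖p‖ ^ 4 :=
  Real.sq_sqrt (by positivity)

theorem factor_nonneg (b : ℝ) (p : Plane) : 0 ≤ factor b p := Real.sqrt_nonneg _

theorem continuous_factor (b : ℝ) : Continuous (factor b) := by
  unfold factor; fun_prop

/-- The radial coefficient `√(1 − k² + b|p|²)` of the calibration with multiplier `k`. -/
noncomputable def radial (b k : ℝ) (p : Plane) : ℝ := Real.sqrt (1 - k ^ 2 + b * ‖p‖ ^ 2)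

/-- A primitive of the radial part of the calibration. -/
noncomputable def potential (b k : ℝ) (p : Plane) : ℝ :=
  (1 - k ^ 2 + b * ‖p‖ ^ 2) ^ (3 / 2 : ℝ) / (3 * b)

/-- The amount by which the energy density exceeds the calibration. -/
noncomputable def defect (b k : ℝ) (p v : Plane) : ℝ :=
  factor b p * ‖v‖ - (k * wedge p v - radial b k p * inner ℝ p v)

theorem radial_sq {b k : ℝ} (hb : 0 < b) (hk : k ^ 2 ≤ 1) (p : Plane) : radial b k p ^ 2 = 1 - k ^ 2 + b * ‖p‖ ^ 2 :=
  Real.sq_sqrt (by have : 0 ≤ b * ‖p‖ ^ 2 := by positivity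
                   linarith)

theorem factor_mul_norm_sq {b k : ℝ} (hb : 0 < b) (hk : k ^ 2 ≤ 1) (p v : Plane) : (factor b p * ‖v‖) ^ 2 =
    (k * wedge p v - radial b k p * inner ℝ p v) ^ 2 +
      (k * inner ℝ p v + radial b k p * wedge p v) ^ 2 := by
  have h1 := wedge_sq_add_inner_sq p v
  have h2 := radial_sq hb hk p
  rw [mul_pow, factor_sq hb]
  linear_combination (-(k ^ 2) - radial b k p ^ 2) * h1 - ‖p‖ ^ 2 * ‖v‖ ^ 2 * h2

theorem abs_calibration_le {b k : ℝ} (hb : 0 < b) (hk : k ^ 2 ≤ 1) (p v : Plane) :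
    |k * wedge p v - radial b k p * inner ℝ p v| ≤ factor b p * ‖v‖ := by
  apply abs_le_of_sq_le_sq
  · rw [factor_mul_norm_sq hb hk]; nlinarith [sq_nonneg (k * inner ℝ p v + radial b k p * wedge p v)]
  · have := factor_nonneg b p; positivity

theorem defect_nonneg {b k : ℝ} (hb : 0 < b) (hk : k ^ 2 ≤ 1) (p v : Plane) : 0 ≤ defect b k p v :=
  sub_nonneg.2 ((le_abs_self _).trans (abs_calibration_le hb hk p v))

theorem abs_radial_mul_inner_le {b k : ℝ} (hb : 0 < b) (hk : k ^ 2 ≤ 1) (p v : Plane) :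
    |radial b k p * inner ℝ p v| ≤ factor b p * ‖v‖ := by
  apply abs_le_of_sq_le_sq
  · have h1 := wedge_sq_add_inner_sq p v
    have h2 := radial_sq hb hk p
    rw [mul_pow, mul_pow, factor_sq hb]
    have h3 : ‖p‖ ^ 2 + b * ‖p‖ ^ 4 = (k ^ 2 + radial b k p ^ 2) * ‖p‖ ^ 2 := by rw [h2]; ring
    rw [h3, mul_assoc, ← h1]
    have : 0 ≤ k ^ 2 * (wedge p v ^ 2 + inner ℝ p v ^ 2) + radial b k p ^ 2 * wedge p v ^ 2 := by
      positivity
    linarith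
  · have := factor_nonneg b p; positivity

theorem continuous_radial (b k : ℝ) : Continuous (radial b k) := by
  unfold radial; fun_prop

theorem contDiff_potential (b k : ℝ) : ContDiff ℝ 1 (potential b k) := by
  have h : ContDiff ℝ 1 (fun x : ℝ => x ^ (3 / 2 : ℝ)) := by
    have := Real.contDiff_rpow_const_of_le (p := 3 / 2) (n := 1) (by norm_num)
    exact_mod_cast this
  have h2 : ContDiff ℝ 1 (fun p : Plane => 1 - k ^ 2 + b * ‖p‖ ^ 2) :=
    contDiff_const.add (contDiff_const.mul (contDiff_norm_sq ℝ))
  exact (h.comp h2).div_const _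

theorem hasDerivAt_potential_comp {b k : ℝ} (hb : 0 < b) {γ : ℝ → Plane} {v : Plane} {t : ℝ}
    (h : HasDerivAt γ v t) :
    HasDerivAt (fun τ => potential b k (γ τ)) (radial b k (γ t) * inner ℝ (γ t) v) t := by
  have h1 := (((h.norm_sq).const_mul b).const_add (1 - k ^ 2)).rpow_const (p := 3 / 2)
    (Or.inr (by norm_num))
  refine (h1.div_const (3 * b)).congr_deriv ?_
  rw [radial, Real.sqrt_eq_rpow]
  norm_num
  field_simp

theorem areaDensity_eq (γ : ℝ → Plane) (t : ℝ) :
    areaDensity γ t = (1 / 2) * wedge (γ t) (deriv γ t) := rfl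

namespace Admissible

variable {b k A s e : ℝ} {p₀ : Plane} {γ : ℝ → Plane}

theorem lt (h : Admissible p₀ A s e γ) (hp₀ : p₀ ≠ 0) : s < e := by
  refine lt_of_le_of_ne h.le fun hse => hp₀ ?_
  rw [← h.start_eq, hse, h.end_eq]

theorem ae_differentiableAt (h : Admissible p₀ A s e γ) :
    ∀ᵐ t ∂volume.restrict (Icc s e), DifferentiableAt ℝ γ t := by
  rw [restrict_Ioo_eq_restrict_Icc.symm, ae_restrict_iff' measurableSet_Ioo]
  exact ae_differentiableAt_of_locallyLipschitzOn_Ico h.locallyLipschitzOn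

theorem aestronglyMeasurable (h : Admissible p₀ A s e γ) :
    AEStronglyMeasurable γ (volume.restrict (Icc s e)) :=
  h.continuousOn.aestronglyMeasurable measurableSet_Icc

theorem integrable_energy (h : Admissible p₀ A s e γ) (hE : energy b s e γ ≠ ⊤) :
    IntegrableOn (fun t => factor b (γ t) * ‖deriv γ t‖) (Icc s e) := by
  refine ⟨?_, ?_⟩
  · exact ((continuous_factor b).comp_aestronglyMeasurable h.aestronglyMeasurable).mul
      (measurable_deriv γ).aestronglyMeasurable.norm
  · rw [hasFiniteIntegral_iff_ofReal]
    · exact lt_top_iff_ne_top.2 hE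
    · exact Filter.Eventually.of_forall fun t => mul_nonneg (factor_nonneg _ _) (norm_nonneg _)

theorem energy_eq_ofReal (h : Admissible p₀ A s e γ) (hE : energy b s e γ ≠ ⊤) :
    energy b s e γ = ENNReal.ofReal (∫ t in Icc s e, factor b (γ t) * ‖deriv γ t‖) := by
  rw [ofReal_integral_eq_lintegral_ofReal (h.integrable_energy hE)]
  · rfl
  · exact Filter.Eventually.of_forall fun t => mul_nonneg (factor_nonneg _ _) (norm_nonneg _)

theorem integrable_radial (hb : 0 < b) (hk : k ^ 2 ≤ 1) (h : Admissible p₀ A s e γ)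
    (hE : energy b s e γ ≠ ⊤) :
    IntegrableOn (fun t => radial b k (γ t) * inner ℝ (γ t) (deriv γ t)) (Icc s e) := by
  refine (h.integrable_energy hE).mono' ?_ ?_
  · exact ((continuous_radial b k).comp_aestronglyMeasurable h.aestronglyMeasurable).mul
      (h.aestronglyMeasurable.inner (measurable_deriv γ).aestronglyMeasurable)
  · exact Filter.Eventually.of_forall fun t => abs_radial_mul_inner_le hb hk _ _

theorem integral_radial (hb : 0 < b) (hk : k ^ 2 ≤ 1) (hp₀ : p₀ ≠ 0) (h : Admissible p₀ A s e γ)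
    (hE : energy b s e γ ≠ ⊤) :
    ∫ t in Icc s e, radial b k (γ t) * inner ℝ (γ t) (deriv γ t) =
      potential b k 0 - potential b k p₀ := by
  have hae : deriv (fun τ => potential b k (γ τ)) =ᵐ[volume.restrict (Icc s e)]
      fun t => radial b k (γ t) * inner ℝ (γ t) (deriv γ t) := by
    filter_upwards [h.ae_differentiableAt] with t ht
    exact (hasDerivAt_potential_comp hb ht.hasDerivAt).deriv
  have hsub := integral_deriv_eq_sub_of_locallyLipschitzOn_Ico
    (φ := fun τ => potential b k (γ τ)) (h.lt hp₀)
    ((contDiff_potential b k).continuous.comp_continuousOn h.continuousOn)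
    ((contDiff_potential b k).locallyLipschitz.comp_locallyLipschitzOn h.locallyLipschitzOn)
    ((integrable_congr hae).2 (h.integrable_radial hb hk hE))
  rwa [integral_congr_ae hae, h.start_eq, h.end_eq] at hsub

theorem integrable_defect (hb : 0 < b) (hk : k ^ 2 ≤ 1) (h : Admissible p₀ A s e γ)
    (hE : energy b s e γ ≠ ⊤) :
    IntegrableOn (fun t => defect b k (γ t) (deriv γ t)) (Icc s e) := by
  refine ((h.integrable_energy hE).sub (((h.area_integrable).const_mul (2 * k)).sub
    (h.integrable_radial hb hk hE))).congr (Filter.Eventually.of_forall fun t => ?_)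
  simp only [defect, Pi.sub_apply, areaDensity_eq]
  ring

/-- The energy is the calibrated value plus the integral of the defect. -/
theorem integral_energy_eq (hb : 0 < b) (hk : k ^ 2 ≤ 1) (hp₀ : p₀ ≠ 0)
    (h : Admissible p₀ A s e γ) (hE : energy b s e γ ≠ ⊤) :
    ∫ t in Icc s e, factor b (γ t) * ‖deriv γ t‖ =
      2 * k * A + (potential b k p₀ - potential b k 0) +
        ∫ t in Icc s e, defect b k (γ t) (deriv γ t) := by
  have h1 : ∀ t, defect b k (γ t) (deriv γ t) = factor b (γ t) * ‖deriv γ t‖ -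
      (2 * k * areaDensity γ t - radial b k (γ t) * inner ℝ (γ t) (deriv γ t)) := fun t => by
    simp only [defect, areaDensity_eq]
    ring
  have hcal : IntegrableOn (fun t => 2 * k * areaDensity γ t -
      radial b k (γ t) * inner ℝ (γ t) (deriv γ t)) (Icc s e) :=
    (h.area_integrable.const_mul (2 * k)).sub (h.integrable_radial hb hk hE)
  simp_rw [h1]
  rw [integral_sub (h.integrable_energy hE) hcal, integral_sub (h.area_integrable.const_mul (2 * k))
    (h.integrable_radial hb hk hE), h.integral_radial hb hk hp₀ hE, integral_const_mul, h.area_eq]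
  ring

theorem ofReal_le_energy (hb : 0 < b) (hk : k ^ 2 ≤ 1) (hp₀ : p₀ ≠ 0)
    (h : Admissible p₀ A s e γ) :
    ENNReal.ofReal (2 * k * A + (potential b k p₀ - potential b k 0)) ≤ energy b s e γ := by
  by_cases hE : energy b s e γ = ⊤
  · simp [hE]
  rw [h.energy_eq_ofReal hE, h.integral_energy_eq hb hk hp₀ hE]
  refine ENNReal.ofReal_le_ofReal (le_add_of_nonneg_right (integral_nonneg fun t => ?_))
  exact defect_nonneg hb hk _ _

/-- If the calibration with multiplier `k = ±1` is attained, the area is `k|p₀| / (2√b)`. -/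
theorem area_eq_of_energy_le (hb : 0 < b) (hk : k ^ 2 = 1) (hp₀ : p₀ ≠ 0)
    (h : Admissible p₀ A s e γ)
    (hE : energy b s e γ ≤ ENNReal.ofReal (2 * k * A + (potential b k p₀ - potential b k 0)))
    (hpos : 0 ≤ 2 * k * A + (potential b k p₀ - potential b k 0)) :
    A = k * (‖p₀‖ / (2 * Real.sqrt b)) := by
  have hE' : energy b s e γ ≠ ⊤ := ne_top_of_le_ne_top ENNReal.ofReal_ne_top hE
  rw [h.energy_eq_ofReal hE', ENNReal.ofReal_le_ofReal_iff hpos,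
    h.integral_energy_eq hb hk.le hp₀ hE'] at hE
  have hd0 : ∫ t in Icc s e, defect b k (γ t) (deriv γ t) = 0 :=
    le_antisymm (by linarith) (integral_nonneg fun t => defect_nonneg hb hk.le _ _)
  rw [integral_eq_zero_iff_of_nonneg (fun t => defect_nonneg hb hk.le _ _)
    (h.integrable_defect hb hk.le hE')] at hd0
  have hlip : LocallyLipschitzOn (Ico s e) (fun t => ‖γ t‖) :=
    (lipschitzWith_one_norm (E := Plane)).locallyLipschitz.comp_locallyLipschitzOn
      h.locallyLipschitzOn
  have hnd : ∀ᵐ t ∂volume.restrict (Icc s e), DifferentiableAt ℝ (fun t => ‖γ t‖) t := by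
    rw [restrict_Ioo_eq_restrict_Icc.symm, ae_restrict_iff' measurableSet_Ioo]
    exact ae_differentiableAt_of_locallyLipschitzOn_Ico hlip
  have hsb : 0 < Real.sqrt b := Real.sqrt_pos.2 hb
  have hae : deriv (fun t => ‖γ t‖) =ᵐ[volume.restrict (Icc s e)]
      fun t => -(2 * k * Real.sqrt b) * areaDensity γ t := by
    filter_upwards [hd0, h.ae_differentiableAt, hnd] with t ht hγ hn
    simp only [areaDensity_eq]
    by_cases h0 : γ t = 0
    · have hmin : IsLocalMin (fun t => ‖γ t‖) t :=
        Filter.Eventually.of_forall fun u => by simp [h0]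
      rw [hmin.deriv_eq_zero]
      simp [h0, wedge]
    · have hr : 0 < ‖γ t‖ := norm_pos_iff.2 h0
      have hrad : radial b k (γ t) = Real.sqrt b * ‖γ t‖ := by
        rw [radial, hk, sub_self, zero_add, Real.sqrt_mul hb.le, Real.sqrt_sq hr.le]
      have hsq := factor_mul_norm_sq hb hk.le (γ t) (deriv γ t)
      have heq : factor b (γ t) * ‖deriv γ t‖ = k * wedge (γ t) (deriv γ t) -
          radial b k (γ t) * inner ℝ (γ t) (deriv γ t) := sub_eq_zero.1 ht
      rw [heq, left_eq_add, sq_eq_zero_iff, hrad] at hsq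
      have hd : 2 * ‖γ t‖ * deriv (fun t => ‖γ t‖) t = 2 * inner ℝ (γ t) (deriv γ t) := by
        rw [← (hγ.hasDerivAt.norm_sq).deriv]
        have := hn.hasDerivAt.pow 2
        rw [show (fun τ => ‖γ τ‖ ^ 2) = (fun t => ‖γ t‖) ^ 2 from rfl, this.deriv]
        norm_num
      refine mul_left_cancel₀ hr.ne' ?_
      linear_combination hd / 2 + k * hsq - inner ℝ (γ t) (deriv γ t) * hk
  have hint : IntegrableOn (deriv fun t => ‖γ t‖) (Icc s e) :=
    (integrable_congr hae).2 (h.area_integrable.const_mul _)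
  have h1 := integral_deriv_eq_sub_of_locallyLipschitzOn_Ico (h.lt hp₀) h.continuousOn.norm hlip hint
  rw [integral_congr_ae hae, integral_const_mul, h.area_eq, h.start_eq, h.end_eq, norm_zero] at h1
  field_simp
  linear_combination (-k) * h1 - 2 * A * Real.sqrt b * hk

end Admissible

/-- The angle swept after time `t` by a curve whose radius is `R - t` and whose angular speed at
radius `r` is `f r`. -/
noncomputable def sweep (R : ℝ) (f : ℝ → ℝ) (t : ℝ) : ℝ := ∫ τ in (0 : ℝ)..t, f (R - τ)

/-- The curve from `p₀` into the origin whose radius decreases with unit speed and whose angular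
speed at radius `r` is `f r`. -/
noncomputable def spiral (p₀ : Plane) (f : ℝ → ℝ) (t : ℝ) : Plane :=
  !₂[(‖p₀‖ - t) / ‖p₀‖ * (Real.cos (sweep ‖p₀‖ f t) * p₀ 0 - Real.sin (sweep ‖p₀‖ f t) * p₀ 1),
    (‖p₀‖ - t) / ‖p₀‖ * (Real.sin (sweep ‖p₀‖ f t) * p₀ 0 + Real.cos (sweep ‖p₀‖ f t) * p₀ 1)]

/-- The velocity of `spiral`. -/
noncomputable def spiralVelocity (p₀ : Plane) (f : ℝ → ℝ) (t : ℝ) : Plane :=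
  !₂[-1 / ‖p₀‖ * (Real.cos (sweep ‖p₀‖ f t) * p₀ 0 - Real.sin (sweep ‖p₀‖ f t) * p₀ 1) +
      (‖p₀‖ - t) / ‖p₀‖ * (f (‖p₀‖ - t) *
        (-Real.sin (sweep ‖p₀‖ f t) * p₀ 0 - Real.cos (sweep ‖p₀‖ f t) * p₀ 1)),
    -1 / ‖p₀‖ * (Real.sin (sweep ‖p₀‖ f t) * p₀ 0 + Real.cos (sweep ‖p₀‖ f t) * p₀ 1) +
      (‖p₀‖ - t) / ‖p₀‖ * (f (‖p₀‖ - t) *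
        (Real.cos (sweep ‖p₀‖ f t) * p₀ 0 - Real.sin (sweep ‖p₀‖ f t) * p₀ 1))]

section Spiral

variable {p₀ : Plane} {f : ℝ → ℝ} {t : ℝ}

theorem continuousOn_comp_sub {R : ℝ} (hf : ContinuousOn f (Ioi 0)) :
    ContinuousOn (fun τ => f (R - τ)) (Iio R) :=
  hf.comp (by fun_prop) fun τ hτ => by simpa using hτ

theorem hasDerivAt_sweep {R : ℝ} (hR : 0 < R) (hf : ContinuousOn f (Ioi 0)) (ht : t < R) :
    HasDerivAt (sweep R f) (f (R - t)) t := by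
  have hc := continuousOn_comp_sub (R := R) hf
  have hsub : uIcc 0 t ⊆ Iio R := fun x hx => by
    rw [mem_uIcc] at hx
    simp only [mem_Iio]
    rcases hx with hx | hx <;> linarith
  exact intervalIntegral.integral_hasDerivAt_right (hc.mono hsub).intervalIntegrable
    (hc.stronglyMeasurableAtFilter isOpen_Iio t ht) (hc.continuousAt (Iio_mem_nhds ht))

theorem contDiffOn_sweep {R : ℝ} (hR : 0 < R) (hf : ContinuousOn f (Ioi 0)) :
    ContDiffOn ℝ 1 (sweep R f) (Iio R) := by
  rw [show (1 : WithTop ℕ∞) = 0 + 1 from (zero_add _).symm,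
    contDiffOn_succ_iff_deriv_of_isOpen isOpen_Iio]
  refine ⟨fun t ht => (hasDerivAt_sweep hR hf ht).differentiableAt.differentiableWithinAt,
    by simp, ?_⟩
  rw [contDiffOn_zero]
  exact (continuousOn_comp_sub hf).congr fun t ht => (hasDerivAt_sweep hR hf ht).deriv

theorem contDiffOn_spiral (hp₀ : p₀ ≠ 0) (hf : ContinuousOn f (Ioi 0)) :
    ContDiffOn ℝ 1 (spiral p₀ f) (Iio ‖p₀‖) := by
  have h := contDiffOn_sweep (norm_pos_iff.2 hp₀) hf
  have hc := h.cos
  have hs := h.sin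
  rw [contDiffOn_euclidean]
  intro i
  fin_cases i <;> simp [spiral] <;> fun_prop

theorem hasDerivAt_plane {γ : ℝ → Plane} {v : Plane} (h0 : HasDerivAt (fun τ => γ τ 0) (v 0) t)
    (h1 : HasDerivAt (fun τ => γ τ 1) (v 1) t) : HasDerivAt γ v t := by
  have h : HasDerivAt (fun τ => (γ τ).ofLp) v.ofLp t :=
    hasDerivAt_pi.2 fun i => by fin_cases i <;> assumption
  exact (PiLp.continuousLinearEquiv 2 ℝ fun _ : Fin 2 => ℝ).symm.hasFDerivAt.comp_hasDerivAt t h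

theorem hasDerivAt_spiral (hp₀ : p₀ ≠ 0) (hf : ContinuousOn f (Ioi 0)) (ht : t < ‖p₀‖) :
    HasDerivAt (spiral p₀ f) (spiralVelocity p₀ f t) t := by
  have h := hasDerivAt_sweep (norm_pos_iff.2 hp₀) hf ht
  have hr : HasDerivAt (fun t => (‖p₀‖ - t) / ‖p₀‖) (-1 / ‖p₀‖) t :=
    ((hasDerivAt_id t).const_sub ‖p₀‖).div_const _
  refine hasDerivAt_plane ?_ ?_
  · refine (hr.mul ((h.cos.mul_const (p₀ 0)).sub (h.sin.mul_const (p₀ 1)))).congr_deriv ?_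
    simp only [spiralVelocity, PiLp.toLp_apply, Matrix.cons_val_zero, Pi.sub_apply]
    ring
  · refine (hr.mul ((h.sin.mul_const (p₀ 0)).add (h.cos.mul_const (p₀ 1)))).congr_deriv ?_
    simp only [spiralVelocity, PiLp.toLp_apply, Matrix.cons_val_one,
      Matrix.cons_val_zero, Pi.add_apply]
    ring

theorem norm_sq_spiral (hp₀ : p₀ ≠ 0) (t : ℝ) : ‖spiral p₀ f t‖ ^ 2 = (‖p₀‖ - t) ^ 2 := by
  have h := norm_sq_eq p₀
  have hR : ‖p₀‖ ≠ 0 := norm_ne_zero_iff.2 hp₀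
  have hcs := Real.sin_sq_add_cos_sq (sweep ‖p₀‖ f t)
  rw [norm_sq_eq]
  simp only [spiral, PiLp.toLp_apply, Matrix.cons_val_zero, Matrix.cons_val_one]
  field_simp
  rw [h]
  linear_combination (‖p₀‖ - t) ^ 2 * (p₀ 0 ^ 2 + p₀ 1 ^ 2) * hcs

theorem norm_spiral (hp₀ : p₀ ≠ 0) (t : ℝ) : ‖spiral p₀ f t‖ = |‖p₀‖ - t| := by
  rw [← abs_norm (spiral p₀ f t)]
  exact (sq_eq_sq_iff_abs_eq_abs _ _).1 (norm_sq_spiral hp₀ t)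

theorem inner_spiral (hp₀ : p₀ ≠ 0) (t : ℝ) :
    inner ℝ (spiral p₀ f t) (spiralVelocity p₀ f t) = -(‖p₀‖ - t) := by
  have h := norm_sq_eq p₀
  have hR : ‖p₀‖ ≠ 0 := norm_ne_zero_iff.2 hp₀
  have hcs := Real.sin_sq_add_cos_sq (sweep ‖p₀‖ f t)
  rw [inner_eq]
  simp only [spiral, spiralVelocity, PiLp.toLp_apply, Matrix.cons_val_zero, Matrix.cons_val_one]
  field_simp
  rw [h]
  linear_combination -(‖p₀‖ - t) * (p₀ 0 ^ 2 + p₀ 1 ^ 2) * hcs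

theorem wedge_spiral (hp₀ : p₀ ≠ 0) (t : ℝ) :
    wedge (spiral p₀ f t) (spiralVelocity p₀ f t) = (‖p₀‖ - t) ^ 2 * f (‖p₀‖ - t) := by
  have h := norm_sq_eq p₀
  have hR : ‖p₀‖ ≠ 0 := norm_ne_zero_iff.2 hp₀
  have hcs := Real.sin_sq_add_cos_sq (sweep ‖p₀‖ f t)
  rw [wedge]
  simp only [spiral, spiralVelocity, PiLp.toLp_apply, Matrix.cons_val_zero, Matrix.cons_val_one]
  field_simp
  rw [h]
  linear_combination (‖p₀‖ - t) ^ 2 * f (‖p₀‖ - t) * (p₀ 0 ^ 2 + p₀ 1 ^ 2) * hcs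

theorem norm_sq_spiralVelocity (hp₀ : p₀ ≠ 0) (ht : t < ‖p₀‖) :
    ‖spiralVelocity p₀ f t‖ ^ 2 = 1 + ((‖p₀‖ - t) * f (‖p₀‖ - t)) ^ 2 := by
  have h := wedge_sq_add_inner_sq (spiral p₀ f t) (spiralVelocity p₀ f t)
  rw [wedge_spiral hp₀, inner_spiral hp₀, norm_sq_spiral hp₀] at h
  have hr : 0 < ‖p₀‖ - t := sub_pos.2 ht
  refine mul_left_cancel₀ (pow_ne_zero 2 hr.ne') ?_
  linear_combination -h

theorem areaDensity_spiral (hp₀ : p₀ ≠ 0) (hf : ContinuousOn f (Ioi 0)) (ht : t < ‖p₀‖) :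
    areaDensity (spiral p₀ f) t = (1 / 2) * ((‖p₀‖ - t) ^ 2 * f (‖p₀‖ - t)) := by
  rw [areaDensity_eq, (hasDerivAt_spiral hp₀ hf ht).deriv, wedge_spiral hp₀]

theorem ae_restrict_Icc_of_forall_Ioo {s e : ℝ} {P : ℝ → Prop} (h : ∀ t ∈ Ioo s e, P t) :
    ∀ᵐ t ∂volume.restrict (Icc s e), P t := by
  rw [restrict_Ioo_eq_restrict_Icc.symm, ae_restrict_iff' measurableSet_Ioo]
  exact Filter.Eventually.of_forall h

theorem integrableOn_comp_sub_left {R : ℝ} (hR : 0 < R) {g : ℝ → ℝ}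
    (hg : IntervalIntegrable g volume 0 R) : IntegrableOn (fun t => g (R - t)) (Icc 0 R) := by
  have := (hg.comp_sub_left R).symm
  rw [sub_self, sub_zero, intervalIntegrable_iff_integrableOn_Icc_of_le hR.le] at this
  exact this

theorem integral_Icc_comp_sub_left {R : ℝ} (hR : 0 < R) (g : ℝ → ℝ) :
    ∫ t in Icc 0 R, g (R - t) = ∫ r in (0 : ℝ)..R, g r := by
  rw [integral_Icc_eq_integral_Ioc, ← intervalIntegral.integral_of_le hR.le,
    intervalIntegral.integral_comp_sub_left]
  simp

theorem admissible_spiral (hp₀ : p₀ ≠ 0) (hf : ContinuousOn f (Ioi 0))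
    (hi : IntervalIntegrable (fun r => r ^ 2 * f r) volume 0 ‖p₀‖) :
    Admissible p₀ ((1 / 2) * ∫ r in (0 : ℝ)..‖p₀‖, r ^ 2 * f r) 0 ‖p₀‖ (spiral p₀ f) := by
  have hR : 0 < ‖p₀‖ := norm_pos_iff.2 hp₀
  have hcd := contDiffOn_spiral hp₀ hf
  have hae : areaDensity (spiral p₀ f) =ᵐ[volume.restrict (Icc 0 ‖p₀‖)]
      fun t => (1 / 2) * ((‖p₀‖ - t) ^ 2 * f (‖p₀‖ - t)) :=
    ae_restrict_Icc_of_forall_Ioo fun t ht => areaDensity_spiral hp₀ hf ht.2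
  have hend : spiral p₀ f ‖p₀‖ = 0 := by
    rw [← norm_eq_zero, norm_spiral hp₀, sub_self, abs_zero]
  refine ⟨hR.le, ?_, ?_, ?_, hend, ?_, ?_⟩
  · intro t ht
    rcases ht.2.lt_or_eq with hlt | rfl
    · exact (hcd.continuousOn.continuousAt (Iio_mem_nhds hlt)).continuousWithinAt
    · refine ContinuousAt.continuousWithinAt ?_
      rw [ContinuousAt, hend, tendsto_zero_iff_norm_tendsto_zero]
      simp_rw [norm_spiral hp₀]
      have : Continuous fun t : ℝ => |‖p₀‖ - t| := by fun_prop
      simpa using this.tendsto ‖p₀‖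
  · exact (hcd.locallyLipschitzOn (convex_Iio _)).mono fun t ht => ht.2
  · ext i
    fin_cases i <;> simp [spiral, sweep, hR.ne']
  · exact (integrable_congr hae).2 ((integrableOn_comp_sub_left hR hi).const_mul _)
  · rw [integral_congr_ae hae, integral_const_mul,
      integral_Icc_comp_sub_left hR fun r => r ^ 2 * f r]

/-- An upper bound for the energy of a spiral in terms of a bound `d` for the defect. -/
theorem energy_spiral_le {b k : ℝ} (hb : 0 < b) (hk : k ^ 2 ≤ 1) (hp₀ : p₀ ≠ 0)
    (hf : ContinuousOn f (Ioi 0)) (hi : IntervalIntegrable (fun r => r ^ 2 * f r) volume 0 ‖p₀‖)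
    {d : ℝ} (hd : ∀ r ∈ Ioo 0 ‖p₀‖, Real.sqrt (r ^ 2 + b * r ^ 4) * Real.sqrt (1 + (r * f r) ^ 2) ≤
      k * (r ^ 2 * f r) + Real.sqrt (1 - k ^ 2 + b * r ^ 2) * r + d) :
    energy b 0 ‖p₀‖ (spiral p₀ f) ≤ ENNReal.ofReal
      (2 * k * ((1 / 2) * ∫ r in (0 : ℝ)..‖p₀‖, r ^ 2 * f r) +
        (potential b k p₀ - potential b k 0) + ‖p₀‖ * d) := by
  have hR : 0 < ‖p₀‖ := norm_pos_iff.2 hp₀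
  have hadm := admissible_spiral hp₀ hf hi
  have hdens : ∀ᵐ t ∂volume.restrict (Icc 0 ‖p₀‖),
      factor b (spiral p₀ f t) * ‖deriv (spiral p₀ f) t‖ =
        Real.sqrt ((‖p₀‖ - t) ^ 2 + b * (‖p₀‖ - t) ^ 4) *
          Real.sqrt (1 + ((‖p₀‖ - t) * f (‖p₀‖ - t)) ^ 2) := by
    refine ae_restrict_Icc_of_forall_Ioo fun t ht => ?_
    have hr : 0 < ‖p₀‖ - t := sub_pos.2 ht.2
    rw [(hasDerivAt_spiral hp₀ hf ht.2).deriv, factor, norm_spiral hp₀, abs_of_pos hr,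
      ← norm_sq_spiralVelocity hp₀ ht.2, Real.sqrt_sq (norm_nonneg _)]
  have hbound : ∀ᵐ t ∂volume.restrict (Icc 0 ‖p₀‖),
      factor b (spiral p₀ f t) * ‖deriv (spiral p₀ f) t‖ ≤
        k * ((‖p₀‖ - t) ^ 2 * f (‖p₀‖ - t)) +
          Real.sqrt (1 - k ^ 2 + b * (‖p₀‖ - t) ^ 2) * (‖p₀‖ - t) + d := by
    have h2 : ∀ᵐ t ∂volume.restrict (Icc 0 ‖p₀‖), t ∈ Ioo 0 ‖p₀‖ :=
      ae_restrict_Icc_of_forall_Ioo fun t ht => ht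
    filter_upwards [hdens, h2] with t ht1 ht2
    rw [ht1]
    exact hd _ ⟨sub_pos.2 ht2.2, by linarith [ht2.1]⟩
  have hint : IntegrableOn (fun t => k * ((‖p₀‖ - t) ^ 2 * f (‖p₀‖ - t)) +
      Real.sqrt (1 - k ^ 2 + b * (‖p₀‖ - t) ^ 2) * (‖p₀‖ - t) + d) (Icc 0 ‖p₀‖) := by
    refine (((integrableOn_comp_sub_left hR hi).const_mul k).add ?_).add ?_
    · exact ContinuousOn.integrableOn_Icc (by fun_prop)
    · exact ContinuousOn.integrableOn_Icc (by fun_prop)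
  have hE : energy b 0 ‖p₀‖ (spiral p₀ f) ≠ ⊤ := by
    refine ne_top_of_le_ne_top ?_ (lintegral_mono_ae
      (hbound.mono fun t ht => ENNReal.ofReal_le_ofReal ht))
    exact (hint.lintegral_lt_top).ne
  rw [hadm.energy_eq_ofReal hE, hadm.integral_energy_eq hb hk hp₀ hE]
  refine ENNReal.ofReal_le_ofReal (add_le_add_right ?_ _)
  have hconst : ∫ t in Icc 0 ‖p₀‖, d = ‖p₀‖ * d := by simp
  rw [← hconst]
  refine integral_mono_ae (hadm.integrable_defect hb hk hE)
    (ContinuousOn.integrableOn_Icc continuousOn_const) ?_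
  have h2 : ∀ᵐ t ∂volume.restrict (Icc 0 ‖p₀‖), t ∈ Ioo 0 ‖p₀‖ :=
    ae_restrict_Icc_of_forall_Ioo fun t ht => ht
  filter_upwards [hbound, h2] with t ht1 ht2
  have hr : 0 < ‖p₀‖ - t := sub_pos.2 ht2.2
  rw [(hasDerivAt_spiral hp₀ hf ht2.2).deriv] at ht1 ⊢
  rw [defect, wedge_spiral hp₀, inner_spiral hp₀, radial, norm_spiral hp₀, abs_of_pos hr]
  linarith

end Spiral

theorem potential_zero_le {b k : ℝ} (hb : 0 < b) (hk : k ^ 2 ≤ 1) (p : Plane) :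
    potential b k 0 ≤ potential b k p := by
  have h : 0 ≤ b * ‖p‖ ^ 2 := by positivity
  have h0 : 0 ≤ 1 - k ^ 2 := by linarith
  unfold potential
  refine div_le_div_of_nonneg_right (Real.rpow_le_rpow ?_ ?_ (by norm_num)) (by positivity)
  · simpa using hk
  · simpa using h

/-- The area swept by the calibrated spiral with multiplier `k` that starts at distance `R`. -/
noncomputable def calibratedArea (b R k : ℝ) : ℝ :=
  k / (2 * b) * (Real.sqrt (1 - k ^ 2 + b * R ^ 2) - Real.sqrt (1 - k ^ 2))

theorem exists_calibratedArea_eq {b R A : ℝ} (hb : 0 < b) (hR : 0 < R)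
    (hA : |A| ≤ R / (2 * Real.sqrt b)) : ∃ k : ℝ, k ^ 2 ≤ 1 ∧ calibratedArea b R k = A := by
  have hsb : 0 < Real.sqrt b := Real.sqrt_pos.2 hb
  have hbs : Real.sqrt b ^ 2 = b := Real.sq_sqrt hb.le
  have hval : Real.sqrt (b * R ^ 2) = Real.sqrt b * R := by
    rw [Real.sqrt_mul hb.le, Real.sqrt_sq hR.le]
  have heq : 1 / (2 * b) * (Real.sqrt b * R) = R / (2 * Real.sqrt b) := by
    field_simp
    rw [hbs]
  have hcont : Continuous (calibratedArea b R) := by unfold calibratedArea; fun_prop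
  have h1 : calibratedArea b R 1 = R / (2 * Real.sqrt b) := by
    simp [calibratedArea, hval, ← heq]
  have h2 : calibratedArea b R (-1) = -(R / (2 * Real.sqrt b)) := by
    rw [← h1]; simp [calibratedArea]; ring
  have hmem : A ∈ Icc (calibratedArea b R (-1)) (calibratedArea b R 1) := by
    rw [h1, h2]; exact abs_le.1 hA
  obtain ⟨k, hk, rfl⟩ := intermediate_value_Icc (by norm_num) hcont.continuousOn hmem
  exact ⟨k, by rw [sq_le_one_iff_abs_le_one]; exact abs_le.2 hk, rfl⟩

/-- The angular speed of the calibrated spiral with multiplier `k`. -/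
noncomputable def calibratedSpeed (b k r : ℝ) : ℝ := k / (r * Real.sqrt (1 - k ^ 2 + b * r ^ 2))

theorem sq_mul_calibratedSpeed (b k r : ℝ) :
    r ^ 2 * calibratedSpeed b k r = k * (r / Real.sqrt (1 - k ^ 2 + b * r ^ 2)) := by
  rcases eq_or_ne r 0 with rfl | hr
  · simp
  · rw [calibratedSpeed, ← div_div, ← mul_div_assoc, ← mul_div_assoc]
    field_simp

theorem radicand_pos {b k : ℝ} (hb : 0 < b) (hk : k ^ 2 ≤ 1)
    {r : ℝ} (hr : 0 < r) : 0 < 1 - k ^ 2 + b * r ^ 2 := by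
  have : 0 < b * r ^ 2 := by positivity
  linarith

theorem continuousOn_calibratedSpeed {b k : ℝ} (hb : 0 < b) (hk : k ^ 2 ≤ 1) :
    ContinuousOn (calibratedSpeed b k) (Ioi 0) := by
  refine ContinuousOn.div continuousOn_const (by fun_prop) fun r hr => ?_
  exact (mul_pos hr (Real.sqrt_pos.2 (radicand_pos hb hk hr))).ne'

theorem hasDerivAt_sqrt_radicand {b k : ℝ} (hb : 0 < b) (hk : k ^ 2 ≤ 1)
    {r : ℝ} (hr : 0 < r) :
    HasDerivAt (fun r => Real.sqrt (1 - k ^ 2 + b * r ^ 2) / b)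
      (r / Real.sqrt (1 - k ^ 2 + b * r ^ 2)) r := by
  have h := ((((hasDerivAt_pow 2 r).const_mul b).const_add (1 - k ^ 2)).sqrt
    (radicand_pos hb hk hr).ne').div_const b
  refine h.congr_deriv ?_
  have := Real.sqrt_pos.2 (radicand_pos hb hk hr)
  norm_num
  field_simp

theorem intervalIntegrable_div_sqrt_radicand {b k : ℝ} (hb : 0 < b) (hk : k ^ 2 ≤ 1)
    {R : ℝ} (hR : 0 < R) :
    IntervalIntegrable (fun r => r / Real.sqrt (1 - k ^ 2 + b * r ^ 2)) volume 0 R := by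
  rw [intervalIntegrable_iff_integrableOn_Ioc_of_le hR.le]
  exact intervalIntegral.integrableOn_deriv_of_nonneg
    (g := fun r => Real.sqrt (1 - k ^ 2 + b * r ^ 2) / b) (by fun_prop)
    (fun r hr => hasDerivAt_sqrt_radicand hb hk hr.1)
    (fun r hr => div_nonneg hr.1.le (Real.sqrt_nonneg _))

theorem intervalIntegrable_calibratedSpeed {b k : ℝ} (hb : 0 < b) (hk : k ^ 2 ≤ 1)
    {R : ℝ} (hR : 0 < R) :
    IntervalIntegrable (fun r => r ^ 2 * calibratedSpeed b k r) volume 0 R := by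
  simp_rw [sq_mul_calibratedSpeed]
  exact (intervalIntegrable_div_sqrt_radicand hb hk hR).const_mul k

theorem integral_calibratedSpeed {b k : ℝ} (hb : 0 < b) (hk : k ^ 2 ≤ 1)
    {R : ℝ} (hR : 0 < R) :
    (1 / 2) * ∫ r in (0 : ℝ)..R, r ^ 2 * calibratedSpeed b k r = calibratedArea b R k := by
  simp_rw [sq_mul_calibratedSpeed]
  rw [intervalIntegral.integral_const_mul, intervalIntegral.integral_eq_sub_of_hasDerivAt_of_le
    hR.le (f := fun r => Real.sqrt (1 - k ^ 2 + b * r ^ 2) / b) (by fun_prop)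
    (fun r hr => hasDerivAt_sqrt_radicand hb hk hr.1)
    (intervalIntegrable_div_sqrt_radicand hb hk hR), calibratedArea]
  norm_num
  field_simp

theorem isMinimizer_calibrated {b k : ℝ} (hb : 0 < b) (hk : k ^ 2 ≤ 1)
    {p₀ : Plane} (hp₀ : p₀ ≠ 0) :
    IsMinimizer b p₀ (calibratedArea b ‖p₀‖ k) 0 ‖p₀‖ (spiral p₀ (calibratedSpeed b k)) := by
  have hR : 0 < ‖p₀‖ := norm_pos_iff.2 hp₀
  have hc := continuousOn_calibratedSpeed hb hk
  have hi := intervalIntegrable_calibratedSpeed hb hk hR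
  rw [← integral_calibratedSpeed hb hk hR]
  refine ⟨admissible_spiral hp₀ hc hi, fun _ _ ζ hζ => ?_⟩
  refine le_trans ?_ (hζ.ofReal_le_energy hb hk hp₀)
  refine (energy_spiral_le hb hk hp₀ hc hi (d := 0) fun r hr => ?_).trans_eq (by simp)
  have hpos := radicand_pos hb hk hr.1
  have hS := Real.sqrt_pos.2 hpos
  have hS2 := Real.sq_sqrt hpos.le
  have hr0 := hr.1
  rw [sq_mul_calibratedSpeed, calibratedSpeed]
  set S := Real.sqrt (1 - k ^ 2 + b * r ^ 2)
  have h1 : k * (k * (r / S)) + S * r + 0 = r * (1 + b * r ^ 2) / S := by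
    field_simp
    linear_combination r * hS2
  rw [h1, ← Real.sqrt_mul (by positivity)]
  refine Real.sqrt_le_iff.2 ⟨by positivity, le_of_eq ?_⟩
  field_simp
  linear_combination hS2

/-- The radial profile of mass `2 * B` on `[0, R]` that concentrates at the origin as `δ → 0`. -/
noncomputable def bump (R B δ r : ℝ) : ℝ := 2 * B * δ * (R + δ) / (R * (r + δ) ^ 2)

theorem continuousOn_bump {R B δ : ℝ} (hR : 0 < R) (hδ : 0 < δ) :
    ContinuousOn (bump R B δ) (Ici 0) := by
  refine ContinuousOn.div continuousOn_const (by fun_prop) fun r hr => ?_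
  have hr : 0 ≤ r := hr
  positivity

theorem integral_bump {R B δ : ℝ} (hR : 0 < R) (hδ : 0 < δ) :
    ∫ r in (0 : ℝ)..R, bump R B δ r = 2 * B := by
  have hI : uIcc 0 R ⊆ Ici 0 := by rw [uIcc_of_le hR.le]; exact Icc_subset_Ici_self
  rw [intervalIntegral.integral_eq_sub_of_hasDerivAt
    (f := fun r => -(2 * B * δ * (R + δ) / R) * (r + δ)⁻¹) _
    ((continuousOn_bump hR hδ).mono hI).intervalIntegrable]
  · field_simp
    ring
  · intro r hr
    have hr : 0 ≤ r := hI hr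
    have hne : r + δ ≠ 0 := by positivity
    refine ((((hasDerivAt_id r).add_const δ).inv hne).const_mul _).congr_deriv ?_
    rw [bump]
    simp only [id]
    field_simp

/-- Beyond the extremal area, the calibrated value is still the infimum of the energy. -/
theorem exists_admissible_energy_le {b k A δ : ℝ} (hb : 0 < b) (hk : k ^ 2 = 1) {p₀ : Plane}
    (hp₀ : p₀ ≠ 0) (hkA : k * |A| = A) (hA : ‖p₀‖ / (2 * Real.sqrt b) ≤ |A|) (hδ : 0 < δ) :
    ∃ γ : ℝ → Plane, Admissible p₀ A 0 ‖p₀‖ γ ∧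
      energy b 0 ‖p₀‖ γ ≤ ENNReal.ofReal (2 * k * A + (potential b k p₀ - potential b k 0) +
        b * (|A| - ‖p₀‖ / (2 * Real.sqrt b)) * δ * (‖p₀‖ + δ)) := by
  have hR : 0 < ‖p₀‖ := norm_pos_iff.2 hp₀
  have hsb : 0 < Real.sqrt b := Real.sqrt_pos.2 hb
  have hbs : Real.sqrt b ^ 2 = b := Real.sq_sqrt hb.le
  set R := ‖p₀‖ with hRdef
  set B := |A| - R / (2 * Real.sqrt b) with hB
  have hB0 : 0 ≤ B := sub_nonneg.2 hA
  have hI : uIcc 0 R ⊆ Ici 0 := by rw [uIcc_of_le hR.le]; exact Icc_subset_Ici_self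
  set f : ℝ → ℝ := fun r => k * (1 / Real.sqrt b + bump R B δ r) / r ^ 2 with hfdef
  have hfc : ContinuousOn f (Ioi 0) := by
    refine ContinuousOn.div ?_ (by fun_prop) fun r hr => pow_ne_zero 2 (ne_of_gt hr)
    exact continuousOn_const.mul (continuousOn_const.add
      ((continuousOn_bump hR hδ).mono Ioi_subset_Ici_self))
  have hfr : ∀ r, 0 < r → r ^ 2 * f r = k * (1 / Real.sqrt b + bump R B δ r) := fun r hr => by
    simp only [hfdef]
    field_simp
  have hbi : IntervalIntegrable (bump R B δ) volume 0 R :=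
    ((continuousOn_bump hR hδ).mono hI).intervalIntegrable
  have hEq : EqOn (fun r => k * (1 / Real.sqrt b + bump R B δ r)) (fun r => r ^ 2 * f r)
      (uIoc 0 R) := fun r hr => by
    rw [uIoc_of_le hR.le] at hr
    exact (hfr r hr.1).symm
  have hi : IntervalIntegrable (fun r => r ^ 2 * f r) volume 0 R :=
    ((intervalIntegrable_const.add hbi).const_mul k).congr hEq
  have harea : (1 / 2) * ∫ r in (0 : ℝ)..R, r ^ 2 * f r = A := by
    rw [← intervalIntegral.integral_congr_ae (Filter.Eventually.of_forall hEq),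
      intervalIntegral.integral_const_mul,
      intervalIntegral.integral_add intervalIntegrable_const hbi, integral_bump hR hδ,
      intervalIntegral.integral_const, smul_eq_mul, sub_zero]
    rw [← hkA, hB]
    field_simp
    ring
  refine ⟨spiral p₀ f, harea ▸ admissible_spiral hp₀ hfc hi, ?_⟩
  have hE := energy_spiral_le hb hk.le hp₀ hfc hi (d := b * B * δ * (R + δ) / R) ?_
  · rw [harea] at hE
    refine hE.trans_eq ?_
    congr 2
    rw [← hRdef]
    field_simp
  intro r hr
  have hr0 : 0 < r := hr.1
  have hh0 : 0 ≤ bump R B δ r := by unfold bump; positivity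
  have hrf : (r * f r) ^ 2 = (1 / Real.sqrt b + bump R B δ r) ^ 2 / r ^ 2 := by
    simp only [hfdef]
    field_simp
    rw [hk]
  have hd : b * r ^ 2 * bump R B δ r ≤ 2 * (b * B * δ * (R + δ) / R) := by
    have hle : r ^ 2 / (r + δ) ^ 2 ≤ 1 := by
      rw [div_le_one (by positivity)]
      gcongr
      linarith
    calc b * r ^ 2 * bump R B δ r
        = 2 * (b * B * δ * (R + δ) / R) * (r ^ 2 / (r + δ) ^ 2) := by
          unfold bump
          field_simp
      _ ≤ 2 * (b * B * δ * (R + δ) / R) * 1 := by gcongr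
      _ = _ := mul_one _
  have hd0 : 0 ≤ b * B * δ * (R + δ) / R := by positivity
  rw [hfr r hr0, hrf, hk, sub_self, zero_add, Real.sqrt_mul hb.le, Real.sqrt_sq hr0.le,
    ← Real.sqrt_mul (by positivity)]
  set d := b * B * δ * (R + δ) / R
  set h := bump R B δ r
  set q := Real.sqrt b
  have hkk : k * (k * (1 / q + h)) = 1 / q + h := by linear_combination (1 / q + h) * hk
  rw [hkk]
  refine Real.sqrt_le_iff.2 ⟨by positivity, ?_⟩
  have hlhs : (r ^ 2 + b * r ^ 4) * (1 + (1 / q + h) ^ 2 / r ^ 2) =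
      (1 / q + h + q * r * r) ^ 2 + h * (b * r ^ 2 * h) := by
    rw [← hbs]
    field_simp
    ring
  rw [hlhs]
  have h1 : h * (b * r ^ 2 * h) ≤ h * (2 * d) := mul_le_mul_of_nonneg_left hd hh0
  have h2 : 0 ≤ (1 / q + q * r * r) * d := by positivity
  nlinarith [sq_nonneg d]

theorem abs_area_le_of_isMinimizer {b A s e : ℝ} (hb : 0 < b) {p₀ : Plane} (hp₀ : p₀ ≠ 0)
    {γ : ℝ → Plane} (h : IsMinimizer b p₀ A s e γ) : |A| ≤ ‖p₀‖ / (2 * Real.sqrt b) := by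
  by_contra! hlt
  obtain ⟨k, hk, hkA⟩ : ∃ k : ℝ, k ^ 2 = 1 ∧ k * |A| = A := by
    rcases le_total 0 A with hA | hA
    · exact ⟨1, by norm_num, by rw [abs_of_nonneg hA, one_mul]⟩
    · exact ⟨-1, by norm_num, by rw [abs_of_nonpos hA]; ring⟩
  set M := 2 * k * A + (potential b k p₀ - potential b k 0)
  have hM : 0 ≤ M := by
    have h1 : 2 * k * A = 2 * |A| := by
      conv_lhs => rw [← hkA]
      linear_combination 2 * |A| * hk
    have h2 := potential_zero_le hb hk.le p₀
    have h3 := abs_nonneg A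
    simp only [M, h1]
    linarith
  have hbound : ∀ δ > 0, energy b s e γ ≤ ENNReal.ofReal
      (M + b * (|A| - ‖p₀‖ / (2 * Real.sqrt b)) * δ * (‖p₀‖ + δ)) := fun δ hδ => by
    obtain ⟨ζ, hζ, hζE⟩ := exists_admissible_energy_le hb hk hp₀ hkA hlt.le hδ
    exact (h.2 _ _ _ hζ).trans hζE
  have hcont : Continuous fun δ : ℝ => ENNReal.ofReal
      (M + b * (|A| - ‖p₀‖ / (2 * Real.sqrt b)) * δ * (‖p₀‖ + δ)) :=
    ENNReal.continuous_ofReal.comp (by fun_prop)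
  have hE : energy b s e γ ≤ ENNReal.ofReal M := by
    have ht := (hcont.tendsto 0).mono_left (nhdsWithin_le_nhds (s := Ioi (0 : ℝ)))
    simp only [mul_zero, zero_mul, add_zero] at ht
    exact ge_of_tendsto ht (Filter.eventually_of_mem self_mem_nhdsWithin hbound)
  have hA := h.1.area_eq_of_energy_le hb hk hp₀ hE hM
  have hk1 : |k| = 1 := by rw [← sq_abs] at hk; nlinarith [abs_nonneg k]
  have habs : |A| = ‖p₀‖ / (2 * Real.sqrt b) := by
    rw [hA, abs_mul, hk1, one_mul, abs_of_nonneg (by positivity)]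
  exact hlt.ne' habs

end OneWell

theorem one_well_existence_iff (b : ℝ) (hb : 0 < b) (p₀ : OneWell.Plane) (hp₀ : p₀ ≠ 0) (A : ℝ) :
    (∃ (s e : ℝ) (γ : ℝ → OneWell.Plane), OneWell.IsMinimizer b p₀ A s e γ) ↔
      |A| ≤ ‖p₀‖ / (2 * Real.sqrt b) := by
  constructor
  · rintro ⟨s, e, γ, h⟩
    exact OneWell.abs_area_le_of_isMinimizer hb hp₀ h
  · intro hA
    obtain ⟨k, hk, rfl⟩ := OneWell.exists_calibratedArea_eq hb (norm_pos_iff.2 hp₀) hA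
    exact ⟨_, _, _, OneWell.isMinimizer_calibrated hb hk hp₀⟩
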